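/- arXiv:1008.0518 — 7 statements merged into one kernel-verified Lean document; each statement's English description precedes it below -/
import Mathlib

section
/- For every natural number k and every complex number z, the map f ↦ f^(k)(z) (the k-th complex derivative of f evaluated at z) is a continuous linear functional on H. -/
/-!
The difference quotients of a pointwise differentiable family of continuous linear maps are
continuous linear maps converging pointwise to the derivative, so on a barrelled space (in
particular on a Hilbert space) the Banach–Steinhaus theorem makes the derivative continuous and
linear. Iterating this for the family of point evaluations gives all higher derivatives.
-/

open Filter Topology

section

variable {𝕜 E F : Type*} [NontriviallyNormedField 𝕜]
  [AddCommGroup E] [Module 𝕜 E] [UniformSpace E] [IsUniformAddGroup E] [ContinuousSMul 𝕜 E]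
  [BarrelledSpace 𝕜 E] [NormedAddCommGroup F] [NormedSpace 𝕜 F]

theorem exists_continuousLinearMap_hasDerivAt {L : 𝕜 → E →L[𝕜] F} {z : 𝕜}
    (hL : ∀ f, DifferentiableAt 𝕜 (fun w ↦ L w f) z) :
    ∃ L' : E →L[𝕜] F, ∀ f, HasDerivAt (fun w ↦ L w f) (L' f) z := by
  have slope_tendsto : Tendsto (fun w f ↦ slope L z w f) (𝓝[≠] z)
      (𝓝 fun f ↦ deriv (fun w ↦ L w f) z) :=
    tendsto_pi_nhds.mpr fun f ↦ (hL f).hasDerivAt.tendsto_slope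
  exact ⟨continuousLinearMapOfTendsto (slope L z) slope_tendsto, fun f ↦ (hL f).hasDerivAt⟩

theorem derivative_evaluation_continuous_linear_general {ι : E → 𝕜 → F} {k : ℕ}
    (hsmooth : ∀ f, ContDiff 𝕜 k (ι f)) (heval : ∀ z, ∃ L : E →L[𝕜] F, ∀ f, L f = ι f z) (z : 𝕜) :
    ∃ L : E →L[𝕜] F, ∀ f, L f = iteratedDeriv k (ι f) z := by
  induction k generalizing z with
  | zero => simpa only [iteratedDeriv_zero] using heval z
  | succ k ih =>
    choose L hL using ih fun f ↦ (hsmooth f).of_le (mod_cast k.le_succ)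
    have L_eq (f : E) : (fun w ↦ L w f) = iteratedDeriv k (ι f) := funext fun w ↦ hL w f
    have L_differentiable (f : E) : Differentiable 𝕜 fun w ↦ L w f :=
      L_eq f ▸ (hsmooth f).differentiable_iteratedDeriv k (mod_cast k.lt_succ_self)
    obtain ⟨L', hL'⟩ := exists_continuousLinearMap_hasDerivAt fun f ↦ L_differentiable f z
    exact ⟨L', fun f ↦ by rw [iteratedDeriv_succ, ← L_eq, (hL' f).deriv]⟩

end

/-- If `H` is a complex Hilbert space of entire functions (realized via an
injective linear map `ι : H →ₗ[ℂ] (ℂ → ℂ)` whose image consists of entire functions) on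
which every point evaluation `f ↦ ι f z` is a continuous linear functional, then for every
`k : ℕ` and `z : ℂ` the map `f ↦ (ι f)^(k)(z)` is a continuous linear functional on `H`. -/
theorem derivative_evaluation_continuous_linear
    {H : Type*} [NormedAddCommGroup H] [InnerProductSpace ℂ H] [CompleteSpace H]
    (ι : H →ₗ[ℂ] (ℂ → ℂ)) (hι : Function.Injective ι)
    (hdiff : ∀ f : H, Differentiable ℂ (ι f))
    (heval : ∀ z : ℂ, ∃ L : H →L[ℂ] ℂ, ∀ f : H, L f = ι f z)
    (k : ℕ) (z : ℂ) :
    ∃ L : H →L[ℂ] ℂ, ∀ f : H, L f = iteratedDeriv k (ι f) z :=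
  derivative_evaluation_continuous_linear_general (fun f ↦ (hdiff f).contDiff) heval z
end

section
/- For every w ∈ ℂ one has conj(e₁)·𝓔(w) − conj(f₁)·𝓕(w) = −i·Z₁(w). -/
/-!
The numerator `N w = conj e₁ * E w - conj f₁ * F w` equals `i (conj z₁ - w) Z₁ w` everywhere.
Combining the equations for `𝓔` and `𝓕` with the same coefficients gives
`(w - z₁) (conj e₁ * 𝓔 w - conj f₁ * 𝓕 w) = N w - N z₁ * Z₁ w / Z₁ z₁`, whose right-hand side is
`i ((conj z₁ - w) - (conj z₁ - z₁)) Z₁ w = -i (w - z₁) Z₁ w`. Cancel `w - z₁` and let `w → z₁`.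
-/

open Filter Topology

theorem conj_mul_apply_conj_eq {R : Type*} [CommSemiring R] [StarRing R] {E F : R → R}
    (hF : ∀ z, F z = starRingEnd R (E (starRingEnd R z))) (z : R) :
    starRingEnd R (E z) * E (starRingEnd R z) = starRingEnd R (F z) * F (starRingEnd R z) := by
  simp only [hF, starRingEnd_self_apply, mul_comm]

theorem conj_mul_sub_conj_mul_eq_I_mul_sub_mul {E F Z : ℂ → ℂ} {z : ℂ}
    (hF : ∀ w, F w = starRingEnd ℂ (E (starRingEnd ℂ w)))
    (hZ : ∀ w, w ≠ starRingEnd ℂ z →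
      Z w = (starRingEnd ℂ (E z) * E w - starRingEnd ℂ (F z) * F w) /
        (Complex.I * (starRingEnd ℂ z - w)))
    (w : ℂ) :
    starRingEnd ℂ (E z) * E w - starRingEnd ℂ (F z) * F w =
      Complex.I * (starRingEnd ℂ z - w) * Z w := by
  obtain rfl | hw := eq_or_ne w (starRingEnd ℂ z)
  · rw [conj_mul_apply_conj_eq hF, sub_self, sub_self, mul_zero, zero_mul]
  · have hden : Complex.I * (starRingEnd ℂ z - w) ≠ 0 :=
      mul_ne_zero Complex.I_ne_zero (sub_ne_zero.mpr hw.symm)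
    rw [hZ w hw, mul_div_cancel₀ _ hden]

section Field

variable {K : Type*} [Field K] {E F Z 𝓔 𝓕 : K → K} {a b k z z' : K}

theorem mul_quotient_sub_mul_quotient_eq_neg_mul_of_ne
    (hN : ∀ w, a * E w - b * F w = k * (z' - w) * Z w) (hz : Z z ≠ 0) {w : K} (hw : w ≠ z)
    (h𝓔 : (w - z) * 𝓔 w = E w - E z * Z w / Z z)
    (h𝓕 : (w - z) * 𝓕 w = F w - F z * Z w / Z z) :
    a * 𝓔 w - b * 𝓕 w = -k * Z w := by
  refine mul_left_cancel₀ (sub_ne_zero.mpr hw) ?_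
  calc (w - z) * (a * 𝓔 w - b * 𝓕 w)
      = (a * E w - b * F w) - (a * E z - b * F z) * Z w / Z z := by
        linear_combination a * h𝓔 - b * h𝓕
    _ = k * (z' - w) * Z w - k * (z' - z) * Z z * Z w / Z z := by rw [hN w, hN z]
    _ = (w - z) * (-k * Z w) := by field_simp; ring

theorem mul_quotient_sub_mul_quotient_eq_neg_mul
    [TopologicalSpace K] [IsTopologicalRing K] [T2Space K] [(𝓝[≠] z).NeBot]
    (hN : ∀ w, a * E w - b * F w = k * (z' - w) * Z w) (hz : Z z ≠ 0)
    (hZc : ContinuousAt Z z) (h𝓔c : ContinuousAt 𝓔 z) (h𝓕c : ContinuousAt 𝓕 z)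
    (h𝓔 : ∀ w, (w - z) * 𝓔 w = E w - E z * Z w / Z z)
    (h𝓕 : ∀ w, (w - z) * 𝓕 w = F w - F z * Z w / Z z) (w : K) :
    a * 𝓔 w - b * 𝓕 w = -k * Z w := by
  have off_z : ∀ v ≠ z, a * 𝓔 v - b * 𝓕 v = -k * Z v := fun v hv =>
    mul_quotient_sub_mul_quotient_eq_neg_mul_of_ne hN hz hv (h𝓔 v) (h𝓕 v)
  have near_z : (fun v => a * 𝓔 v - b * 𝓕 v) =ᶠ[𝓝 z] fun v => -k * Z v :=
    (ContinuousAt.eventuallyEq_nhds_iff_eventuallyEq_nhdsNE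
      (by fun_prop) (by fun_prop)).mp (eventually_mem_nhdsWithin.mono off_z)
  obtain rfl | hw := eq_or_ne w z
  · exact near_z.eq_of_nhds
  · exact off_z w hw

end Field

theorem conj_e_mul_calE_sub_conj_f_mul_calF_general
    {E F Z₁ 𝓔 𝓕 : ℂ → ℂ} {z₁ : ℂ}
    (hF : ∀ z, F z = starRingEnd ℂ (E (starRingEnd ℂ z)))
    (hZ₁c : ContinuousAt Z₁ z₁)
    (hZ₁ : ∀ w, w ≠ starRingEnd ℂ z₁ →
      Z₁ w = (starRingEnd ℂ (E z₁) * E w - starRingEnd ℂ (F z₁) * F w) /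
        (Complex.I * (starRingEnd ℂ z₁ - w)))
    (hc₁ne : Z₁ z₁ ≠ 0)
    (h𝓔c : ContinuousAt 𝓔 z₁) (h𝓕c : ContinuousAt 𝓕 z₁)
    (h𝓔 : ∀ w, (w - z₁) * 𝓔 w = E w - E z₁ * Z₁ w / Z₁ z₁)
    (h𝓕 : ∀ w, (w - z₁) * 𝓕 w = F w - F z₁ * Z₁ w / Z₁ z₁) (w : ℂ) :
    starRingEnd ℂ (E z₁) * 𝓔 w - starRingEnd ℂ (F z₁) * 𝓕 w = -Complex.I * Z₁ w :=
  mul_quotient_sub_mul_quotient_eq_neg_mul (conj_mul_sub_conj_mul_eq_I_mul_sub_mul hF hZ₁) hc₁ne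
    hZ₁c h𝓔c h𝓕c h𝓔 h𝓕 w

/-- In the one-trivial-zero situation (see context), for every `w ∈ ℂ` one has
`conj(e₁)·𝓔(w) − conj(f₁)·𝓕(w) = −i·Z₁(w)`, where `e₁ = E(z₁)`, `f₁ = F(z₁)`. -/
theorem conj_e_mul_calE_sub_conj_f_mul_calF
    (E F Z₁ 𝓔 𝓕 : ℂ → ℂ) (z₁ : ℂ)
    (hE : Differentiable ℂ E)
    (hF : ∀ z, F z = starRingEnd ℂ (E (starRingEnd ℂ z)))
    (hZ₁diff : Differentiable ℂ Z₁)
    (hZ₁ : ∀ w, w ≠ starRingEnd ℂ z₁ →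
      Z₁ w = (starRingEnd ℂ (E z₁) * E w - starRingEnd ℂ (F z₁) * F w) /
        (Complex.I * (starRingEnd ℂ z₁ - w)))
    (hc₁real : (Z₁ z₁).im = 0) (hc₁ne : Z₁ z₁ ≠ 0)
    (h𝓔diff : Differentiable ℂ 𝓔) (h𝓕diff : Differentiable ℂ 𝓕)
    (h𝓔 : ∀ w, (w - z₁) * 𝓔 w = E w - E z₁ * Z₁ w / Z₁ z₁)
    (h𝓕 : ∀ w, (w - z₁) * 𝓕 w = F w - F z₁ * Z₁ w / Z₁ z₁) :
    ∀ w : ℂ, starRingEnd ℂ (E z₁) * 𝓔 w - starRingEnd ℂ (F z₁) * 𝓕 w =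
      -Complex.I * Z₁ w :=
  conj_e_mul_calE_sub_conj_f_mul_calF_general hF hZ₁diff.continuous.continuousAt hZ₁ hc₁ne
    h𝓔diff.continuous.continuousAt h𝓕diff.continuous.continuousAt h𝓔 h𝓕
end

section
/- For every w ∈ ℂ one has 𝓕(w) = conj(𝓔(conj(w))); that is, 𝓕 = 𝓔*. -/
/-!
Write `f*(w) = conj (f (conj w))`, so that `F = E*`, and let `c = Z₁(z₁)`. The kernel identity for
`Z₁` at `z₁` reflects to one for `Z₁*` at `conj z₁`, and the equation defining `𝓔` reflects to one
for `𝓔*`. As `c` is real, eliminating both kernels from `c (w - z₁)(w - conj z₁)(𝓕 - 𝓔*)(w)` cancels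
the terms in `E(w)` and leaves
`(c (z₁ - conj z₁) - i (|E(z₁)|² - |F(z₁)|²)) F(w)`,
which is zero by the kernel identity at `w = z₁`. Hence `𝓕 = 𝓔*` off `{z₁, conj z₁}`, and everywhere
by continuity.
-/

section DeBrangesKernel

open scoped ComplexConjugate

/-- The reflection `f*` of a function `f` in the real axis, given by `f*(z) = conj (f (conj z))`. -/
def conjReflect (f : ℂ → ℂ) (z : ℂ) : ℂ := conj (f (conj z))

/-- `K` is the kernel section at `z` of the de Branges space with structure function `E`, up to
normalization. The denominator `i (conj z - w)` is cleared, leaving `K (conj z)` unconstrained. -/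
def IsDeBrangesKernelAt (E : ℂ → ℂ) (z : ℂ) (K : ℂ → ℂ) : Prop :=
  ∀ w, (w - conj z) * K w =
    Complex.I * (conj (E z) * E w - conj (conjReflect E z) * conjReflect E w)

/-- `g` is the quotient by `w - z` of the function obtained from `G` by subtracting the multiple of
`K` that makes it vanish at `z`; only `K z ≠ 0` is meaningful. The division by `w - z` is cleared,
leaving `g z` unconstrained. -/
def IsReducedQuotient (K : ℂ → ℂ) (z : ℂ) (G g : ℂ → ℂ) : Prop :=
  ∀ w, (w - z) * g w = G w - G z * K w / K z

variable {E K 𝓔 𝓕 : ℂ → ℂ} {z w : ℂ}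

lemma conjReflect_conj (f : ℂ → ℂ) (z : ℂ) : conjReflect f (conj z) = conj (f z) := by
  rw [conjReflect, Complex.conj_conj]

lemma conj_conjReflect (f : ℂ → ℂ) (z : ℂ) : conj (conjReflect f z) = f (conj z) :=
  Complex.conj_conj _

lemma continuous_conjReflect {f : ℂ → ℂ} (hf : Continuous f) : Continuous (conjReflect f) :=
  Complex.continuous_conj.comp (hf.comp Complex.continuous_conj)

protected lemma IsReducedQuotient.conjReflect {G g : ℂ → ℂ} (hg : IsReducedQuotient K z G g) :
    IsReducedQuotient (conjReflect K) (conj z) (conjReflect G) (conjReflect g) := fun w ↦ by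
  simpa only [conjReflect, map_mul, map_sub, map_div₀, Complex.conj_conj]
    using congrArg conj (hg (conj w))

protected lemma IsDeBrangesKernelAt.conjReflect (hK : IsDeBrangesKernelAt E z K) :
    IsDeBrangesKernelAt E (conj z) (conjReflect K) := fun w ↦ by
  have h := congrArg conj (hK (conj w))
  simp only [conjReflect, map_mul, map_sub, Complex.conj_conj, Complex.conj_I] at h ⊢
  linear_combination h

lemma isDeBrangesKernelAt_of_eq_div
    (hK : ∀ w, w ≠ conj z →
      K w = (conj (E z) * E w - conj (conjReflect E z) * conjReflect E w) /
        (Complex.I * (conj z - w))) :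
    IsDeBrangesKernelAt E z K := fun w ↦ by
  rcases eq_or_ne w (conj z) with rfl | hw
  · rw [conjReflect_conj, conj_conjReflect]
    ring
  · have hden : Complex.I * (conj z - w) ≠ 0 :=
      mul_ne_zero Complex.I_ne_zero (sub_ne_zero.mpr hw.symm)
    have hmul := (eq_div_iff hden).mp (hK w hw)
    linear_combination Complex.I * hmul - (conj z - w) * K w * Complex.I_sq

lemma IsDeBrangesKernelAt.eq_conjReflect_of_ne (hK : IsDeBrangesKernelAt E z K)
    (hreal : (K z).im = 0) (hne : K z ≠ 0) (h𝓔 : IsReducedQuotient K z E 𝓔)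
    (h𝓕 : IsReducedQuotient K z (conjReflect E) 𝓕) (hwz : w ≠ z) (hwz' : w ≠ conj z) :
    𝓕 w = conjReflect 𝓔 w := by
  have h𝓕w : (w - z) * 𝓕 w * K z = conjReflect E w * K z - conjReflect E z * K w := by
    rw [h𝓕 w, sub_mul, div_mul_cancel₀ _ hne]
  have h𝓔w : (w - conj z) * conjReflect 𝓔 w * K z =
      conjReflect E w * K z - conj (E z) * conjReflect K w := by
    rw [h𝓔.conjReflect w, conjReflect_conj, conjReflect_conj, Complex.conj_eq_iff_im.mpr hreal,
      sub_mul, div_mul_cancel₀ _ hne]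
  have hKw' : (w - z) * conjReflect K w =
      Complex.I * (conjReflect E z * E w - E z * conjReflect E w) := by
    simpa only [conjReflect_conj, Complex.conj_conj, ← conj_conjReflect E z]
      using hK.conjReflect w
  apply mul_left_cancel₀ (mul_ne_zero (mul_ne_zero (sub_ne_zero.mpr hwz)
    (sub_ne_zero.mpr hwz')) hne)
  linear_combination (w - conj z) * h𝓕w - (w - z) * h𝓔w - conjReflect E z * hK w
    + conj (E z) * hKw' + conjReflect E w * hK z

theorem calF_eq_calE_star_general (hK : IsDeBrangesKernelAt E z K)
    (hreal : (K z).im = 0) (hne : K z ≠ 0) (h𝓔cont : Continuous 𝓔) (h𝓕cont : Continuous 𝓕)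
    (h𝓔 : IsReducedQuotient K z E 𝓔) (h𝓕 : IsReducedQuotient K z (conjReflect E) 𝓕) :
    𝓕 = conjReflect 𝓔 := by
  have hdense : Dense ({z, conj z}ᶜ : Set ℂ) := (Set.toFinite _).countable.dense_compl ℝ
  refine h𝓕cont.ext_on hdense (continuous_conjReflect h𝓔cont) fun w hw ↦ ?_
  obtain ⟨hwz, hwz'⟩ : w ≠ z ∧ w ≠ conj z := by
    simpa only [Set.mem_compl_iff, Set.mem_insert_iff, Set.mem_singleton_iff, not_or] using hw
  exact hK.eq_conjReflect_of_ne hreal hne h𝓔 h𝓕 hwz hwz'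

end DeBrangesKernel

/-- In the one-trivial-zero situation (see context), `𝓕 = 𝓔*`, i.e. for every
`w ∈ ℂ` one has `𝓕(w) = conj(𝓔(conj(w)))`. -/
theorem calF_eq_calE_star
    (E F Z₁ 𝓔 𝓕 : ℂ → ℂ) (z₁ : ℂ)
    (hE : Differentiable ℂ E)
    (hF : ∀ z, F z = starRingEnd ℂ (E (starRingEnd ℂ z)))
    (hZ₁diff : Differentiable ℂ Z₁)
    (hZ₁ : ∀ w, w ≠ starRingEnd ℂ z₁ →
      Z₁ w = (starRingEnd ℂ (E z₁) * E w - starRingEnd ℂ (F z₁) * F w) /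
        (Complex.I * (starRingEnd ℂ z₁ - w)))
    (hc₁real : (Z₁ z₁).im = 0) (hc₁ne : Z₁ z₁ ≠ 0)
    (h𝓔diff : Differentiable ℂ 𝓔) (h𝓕diff : Differentiable ℂ 𝓕)
    (h𝓔 : ∀ w, (w - z₁) * 𝓔 w = E w - E z₁ * Z₁ w / Z₁ z₁)
    (h𝓕 : ∀ w, (w - z₁) * 𝓕 w = F w - F z₁ * Z₁ w / Z₁ z₁) :
    ∀ w : ℂ, 𝓕 w = starRingEnd ℂ (𝓔 (starRingEnd ℂ w)) := by
  obtain rfl : F = conjReflect E := funext hF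
  exact congrFun (calF_eq_calE_star_general (isDeBrangesKernelAt_of_eq_div hZ₁) hc₁real hc₁ne
    h𝓔diff.continuous h𝓕diff.continuous h𝓔 h𝓕)
end

section
/- For all z, w ∈ ℂ one has c₁·(conj(E(z))·E(w) − conj(F(z))·F(w)) − i·(conj(z) − w)·conj(Z₁(z))·Z₁(w) = c₁·(w − z₁)·(conj(z) − conj(z₁))·(conj(𝓔(z))·𝓔(w) − conj(𝓕(z))·𝓕(w)). -/
/-!
Put `Φ = (E, F)` and let `B` be the Hermitian form of signature `(1, 1)` on `ℂ²`. The function `Z₁`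
is the kernel `B (Φ z₁) (Φ w) / (i (conj z₁ - w))`, and `(w - z₁) • (𝓔 w, 𝓕 w)` is `Φ w` minus the
multiple `Z₁ w / c₁` of `Φ z₁`. Expanding `B` on two such differences turns each term other than
`B (Φ z) (Φ w)` into a multiple of `i * conj (Z₁ z) * Z₁ w`, and the coefficients telescope:
`(conj z₁ - w) + (conj z - z₁) - (conj z₁ - z₁) = conj z - w`.
-/

open scoped ComplexConjugate

section SesquilinearForm

variable {K V : Type*} [Field K] [StarRing K] [AddCommGroup V] [Module K V]
  {B : V →ₗ⋆[K] V →ₗ[K] K}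

theorem sesquilin_sub_smul_sub_smul (B : V →ₗ⋆[K] V →ₗ[K] K) (x y u : V) (a b : K) :
    B (x - a • u) (y - b • u) =
      B x y - b * B x u - conj a * B u y + conj a * b * B u u := by
  simp only [map_sub, map_smul, map_smulₛₗ, LinearMap.sub_apply, LinearMap.smul_apply, smul_eq_mul]
  ring

theorem sesquilin_swap_eq_mul_conj_kernel (hB : B.IsSymm) {ι z₁ z k : K} {u v : V}
    (hι : conj ι = -ι) (hZ : B u v = ι * (conj z₁ - z) * k) :
    B v u = ι * (conj z - z₁) * conj k := by
  rw [← hB.eq u v, hZ]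
  simp only [map_mul, map_sub, starRingEnd_self_apply, hι]
  ring

theorem sesquilin_determinantal_identity (hB : B.IsSymm) {ι z₁ : K} {Z : K → K} {Φ Ψ : K → V}
    (hι : conj ι = -ι) (hZ : ∀ w, B (Φ z₁) (Φ w) = ι * (conj z₁ - w) * Z w)
    (hreal : conj (Z z₁) = Z z₁) (hne : Z z₁ ≠ 0)
    (hΨ : ∀ w, (w - z₁) • Ψ w = Φ w - (Z w / Z z₁) • Φ z₁) (z w : K) :
    Z z₁ * B (Φ z) (Φ w) - ι * (conj z - w) * conj (Z z) * Z w =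
      Z z₁ * (w - z₁) * (conj z - conj z₁) * B (Ψ z) (Ψ w) := by
  have conj_quot : conj (Z z / Z z₁) = conj (Z z) / Z z₁ := by rw [map_div₀, hreal]
  symm
  calc Z z₁ * (w - z₁) * (conj z - conj z₁) * B (Ψ z) (Ψ w)
      = Z z₁ * B ((z - z₁) • Ψ z) ((w - z₁) • Ψ w) := by
        simp only [map_smul, map_smulₛₗ, LinearMap.smul_apply, smul_eq_mul, map_sub]
        ring
    _ = Z z₁ * (B (Φ z) (Φ w) - Z w / Z z₁ * (ι * (conj z - z₁) * conj (Z z))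
          - conj (Z z) / Z z₁ * (ι * (conj z₁ - w) * Z w)
          + conj (Z z) / Z z₁ * (Z w / Z z₁) * (ι * (conj z₁ - z₁) * Z z₁)) := by
        rw [hΨ, hΨ, sesquilin_sub_smul_sub_smul, conj_quot,
          sesquilin_swap_eq_mul_conj_kernel hB hι (hZ z), hZ w, hZ z₁]
    _ = Z z₁ * B (Φ z) (Φ w) - ι * (conj z - w) * conj (Z z) * Z w := by
        field_simp
        ring

end SesquilinearForm

section HyperbolicForm

variable (K : Type*) [Field K] [StarRing K]

/-- The Hermitian form `conj x₁ * y₁ - conj x₂ * y₂` on `K × K`, of signature `(1, 1)` for `K = ℂ`.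
On `(E, F)` it gives the numerator of the de Branges kernel. -/
def hyperbolicForm : K × K →ₗ⋆[K] K × K →ₗ[K] K :=
  LinearMap.mk₂'ₛₗ (starRingEnd K) (RingHom.id K)
    (fun x y => conj x.1 * y.1 - conj x.2 * y.2)
    (fun x₁ x₂ y => by simp only [Prod.fst_add, Prod.snd_add, map_add]; ring)
    (fun a x y => by simp only [Prod.smul_fst, Prod.smul_snd, smul_eq_mul, map_mul]; ring)
    (fun x y₁ y₂ => by simp only [Prod.fst_add, Prod.snd_add]; ring)
    (fun a x y => by
      simp only [Prod.smul_fst, Prod.smul_snd, smul_eq_mul, RingHom.id_apply]; ring)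

variable {K}

theorem hyperbolicForm_apply (x y : K × K) :
    hyperbolicForm K x y = conj x.1 * y.1 - conj x.2 * y.2 := rfl

theorem hyperbolicForm_isSymm : (hyperbolicForm K).IsSymm where
  eq x y := by
    simp only [hyperbolicForm_apply, map_sub, map_mul, starRingEnd_self_apply]
    ring

theorem hyperbolicForm_conj_eq_zero {E F : K → K} (hF : ∀ z, F z = conj (E (conj z))) (z : K) :
    hyperbolicForm K (E z, F z) (E (conj z), F (conj z)) = 0 := by
  simp only [hyperbolicForm_apply, hF, starRingEnd_self_apply]
  ring

theorem hyperbolicForm_eq_mul_kernel {E F Z : K → K} {ι z₁ : K} (hι : ι ≠ 0)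
    (hF : ∀ z, F z = conj (E (conj z)))
    (hZ : ∀ w, w ≠ conj z₁ →
      Z w = (conj (E z₁) * E w - conj (F z₁) * F w) / (ι * (conj z₁ - w))) (w : K) :
    hyperbolicForm K (E z₁, F z₁) (E w, F w) = ι * (conj z₁ - w) * Z w := by
  obtain rfl | hw := eq_or_ne w (conj z₁)
  · rw [hyperbolicForm_conj_eq_zero hF, sub_self, mul_zero, zero_mul]
  · rw [hZ w hw, mul_div_cancel₀ _ (mul_ne_zero hι (sub_ne_zero.mpr hw.symm)),
      hyperbolicForm_apply]

end HyperbolicForm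

theorem key_determinantal_identity_one_zero_general {K : Type*} [Field K] [StarRing K]
    {E F Z₁ 𝓔 𝓕 : K → K} {ι z₁ : K} (hι : conj ι = -ι) (hι₀ : ι ≠ 0)
    (hF : ∀ z, F z = conj (E (conj z)))
    (hZ₁ : ∀ w, w ≠ conj z₁ →
      Z₁ w = (conj (E z₁) * E w - conj (F z₁) * F w) / (ι * (conj z₁ - w)))
    (hc₁real : conj (Z₁ z₁) = Z₁ z₁) (hc₁ne : Z₁ z₁ ≠ 0)
    (h𝓔 : ∀ w, (w - z₁) * 𝓔 w = E w - E z₁ * Z₁ w / Z₁ z₁)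
    (h𝓕 : ∀ w, (w - z₁) * 𝓕 w = F w - F z₁ * Z₁ w / Z₁ z₁) (z w : K) :
    Z₁ z₁ * (conj (E z) * E w - conj (F z) * F w) - ι * (conj z - w) * conj (Z₁ z) * Z₁ w =
      Z₁ z₁ * (w - z₁) * (conj z - conj z₁) * (conj (𝓔 z) * 𝓔 w - conj (𝓕 z) * 𝓕 w) := by
  have hΨ (w : K) : (w - z₁) • (𝓔 w, 𝓕 w) = (E w, F w) - (Z₁ w / Z₁ z₁) • (E z₁, F z₁) := by
    simp only [Prod.smul_mk, Prod.mk_sub_mk, smul_eq_mul, h𝓔, h𝓕, div_mul_eq_mul_div,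
      mul_comm (Z₁ w)]
  exact sesquilin_determinantal_identity (Φ := fun w => (E w, F w)) (Ψ := fun w => (𝓔 w, 𝓕 w))
    hyperbolicForm_isSymm hι (hyperbolicForm_eq_mul_kernel hι₀ hF hZ₁) hc₁real hc₁ne hΨ z w

/-- In the one-trivial-zero situation (see context), with `c₁ = Z₁(z₁)`,
for all `z, w ∈ ℂ`:
`c₁·(conj(E z)·E w − conj(F z)·F w) − i·(conj z − w)·conj(Z₁ z)·Z₁ w
  = c₁·(w − z₁)·(conj z − conj z₁)·(conj(𝓔 z)·𝓔 w − conj(𝓕 z)·𝓕 w)`. -/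
theorem key_determinantal_identity_one_zero
    (E F Z₁ 𝓔 𝓕 : ℂ → ℂ) (z₁ : ℂ)
    (hE : Differentiable ℂ E)
    (hF : ∀ z, F z = starRingEnd ℂ (E (starRingEnd ℂ z)))
    (hZ₁diff : Differentiable ℂ Z₁)
    (hZ₁ : ∀ w, w ≠ starRingEnd ℂ z₁ →
      Z₁ w = (starRingEnd ℂ (E z₁) * E w - starRingEnd ℂ (F z₁) * F w) /
        (Complex.I * (starRingEnd ℂ z₁ - w)))
    (hc₁real : (Z₁ z₁).im = 0) (hc₁ne : Z₁ z₁ ≠ 0)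
    (h𝓔diff : Differentiable ℂ 𝓔) (h𝓕diff : Differentiable ℂ 𝓕)
    (h𝓔 : ∀ w, (w - z₁) * 𝓔 w = E w - E z₁ * Z₁ w / Z₁ z₁)
    (h𝓕 : ∀ w, (w - z₁) * 𝓕 w = F w - F z₁ * Z₁ w / Z₁ z₁) :
    ∀ z w : ℂ,
      Z₁ z₁ * (starRingEnd ℂ (E z) * E w - starRingEnd ℂ (F z) * F w) -
        Complex.I * (starRingEnd ℂ z - w) * starRingEnd ℂ (Z₁ z) * Z₁ w =
      Z₁ z₁ * (w - z₁) * (starRingEnd ℂ z - starRingEnd ℂ z₁) *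
        (starRingEnd ℂ (𝓔 z) * 𝓔 w - starRingEnd ℂ (𝓕 z) * 𝓕 w) :=
  key_determinantal_identity_one_zero_general Complex.conj_I Complex.I_ne_zero hF hZ₁
    (Complex.conj_eq_iff_im.mpr hc₁real) hc₁ne h𝓔 h𝓕
end

section
/- If f ∈ H satisfies f^(k_i)(z_i) = 0 for all i = 1, …, n, then the function g(z) := (∏_{i=1}^n (z − z_i)/(z − conj(z_i))) · f*(z), where f*(z) := conj(f(conj(z))) (and g is extended to an entire function, the zeros of f* at the points conj(z_i) cancelling the poles), belongs to H, has the same norm as f, and satisfies g^(k_i)(z_i) = 0 for all i = 1, …, n. -/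
/-!
For entire functions, the conditions `f^(k_i)(z_i) = 0` say exactly that `f = ∏ (z - z_i) · h` with
`h` entire. Then `f* = ∏ (z - conj z_i) · h*`, and axiom (1), applied once for each factor, replaces
every `z - conj z_i` by `z - z_i` without changing the norm. The result is `g = ∏ (z - z_i) · h*`,
which visibly satisfies the vanishing conditions again.
-/

open Finset
open scoped ComplexConjugate Nat

section IteratedDeriv

variable {𝕜 : Type*} [NontriviallyNormedField 𝕜] [CharZero 𝕜] [CompleteSpace 𝕜]

lemma iteratedDeriv_pow_sub_mul_self {u : 𝕜 → 𝕜} (hu : ∀ z, AnalyticAt 𝕜 u z) (k : ℕ) (a : 𝕜) :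
    iteratedDeriv k (fun z ↦ (z - a) ^ k * u z) a = k ! * u a := by
  obtain ⟨v, -, hv⟩ :=
    iteratedDeriv_mul_pow_sub_of_analytic (k := k) (t := 0) (z₀ := a) hu fun _ ↦ rfl
  simpa using hv a

variable {I : Type*} [DecidableEq 𝕜]

lemma iteratedDeriv_prod_sub_mul_eq_zero_iff (s : Finset I) (σ : I → 𝕜) {u : 𝕜 → 𝕜}
    (hu : ∀ z, AnalyticAt 𝕜 u z) (a : 𝕜) :
    iteratedDeriv #{i ∈ s | σ i = a} (fun z ↦ (∏ i ∈ s, (z - σ i)) * u z) a = 0 ↔ u a = 0 := by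
  have hsplit (z : 𝕜) : (∏ i ∈ s, (z - σ i)) * u z =
      (z - a) ^ #{i ∈ s | σ i = a} * ((∏ i ∈ s with σ i ≠ a, (z - σ i)) * u z) := by
    rw [← prod_filter_mul_prod_filter_not s (σ · = a), mul_assoc,
      prod_eq_pow_card fun i hi ↦ by rw [(mem_filter.1 hi).2]]
  have hne : ∏ i ∈ s with σ i ≠ a, (a - σ i) ≠ 0 :=
    prod_ne_zero_iff.2 fun i hi ↦ sub_ne_zero.2 (mem_filter.1 hi).2.symm
  rw [funext hsplit, iteratedDeriv_pow_sub_mul_self (by fun_prop)]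
  simp [Nat.factorial_ne_zero, hne]

lemma iteratedDeriv_prod_sub_mul_eq_zero [LinearOrder I] {s : Finset I} (σ : I → 𝕜) {u : 𝕜 → 𝕜}
    (hu : ∀ z, AnalyticAt 𝕜 u z) {i : I} (hi : i ∈ s) :
    iteratedDeriv #{j ∈ s | j < i ∧ σ j = σ i} (fun z ↦ (∏ j ∈ s, (z - σ j)) * u z) (σ i) = 0 := by
  have hsplit (z : 𝕜) : (∏ j ∈ s, (z - σ j)) * u z =
      (∏ j ∈ s with j < i, (z - σ j)) * ((∏ j ∈ s with ¬ j < i, (z - σ j)) * u z) := by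
    rw [← prod_filter_mul_prod_filter_not s (· < i), mul_assoc]
  have hzero : ∏ j ∈ s with ¬ j < i, (σ i - σ j) = 0 :=
    prod_eq_zero (mem_filter.2 ⟨hi, lt_irrefl i⟩) (sub_self _)
  rw [funext hsplit, ← filter_filter, iteratedDeriv_prod_sub_mul_eq_zero_iff _ _ (by fun_prop),
    hzero, zero_mul]

end IteratedDeriv

section EntireFactorization

lemma exists_differentiable_eq_sub_mul {F : ℂ → ℂ} (hF : Differentiable ℂ F) {a : ℂ}
    (ha : F a = 0) : ∃ h : ℂ → ℂ, Differentiable ℂ h ∧ ∀ z, F z = (z - a) * h z := by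
  refine ⟨dslope F a, ?_, fun z ↦ (sub_smul_dslope_of_zero ha z).symm⟩
  rw [← differentiableOn_univ, Complex.differentiableOn_dslope Filter.univ_mem]
  exact hF.differentiableOn

lemma exists_differentiable_eq_prod_sub_mul {I : Type*} [LinearOrder I] (s : Finset I) (σ : I → ℂ)
    {F : ℂ → ℂ} (hF : Differentiable ℂ F)
    (hzero : ∀ i ∈ s, iteratedDeriv #{j ∈ s | j < i ∧ σ j = σ i} F (σ i) = 0) :
    ∃ h : ℂ → ℂ, Differentiable ℂ h ∧ ∀ z, F z = (∏ i ∈ s, (z - σ i)) * h z := by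
  induction s using Finset.induction_on_max with
  | empty => exact ⟨F, hF, by simp⟩
  | insert m s hm ih =>
    have hcount : ∀ i ∈ s, {j ∈ insert m s | j < i ∧ σ j = σ i} = {j ∈ s | j < i ∧ σ j = σ i} :=
      fun i hi ↦ by rw [filter_insert, if_neg fun h ↦ (hm i hi).not_gt h.1]
    have hcount_max : {j ∈ insert m s | j < m ∧ σ j = σ m} = {j ∈ s | σ j = σ m} := by
      rw [filter_insert, if_neg fun h ↦ lt_irrefl m h.1]
      exact filter_congr fun j hj ↦ and_iff_right (hm j hj)
    obtain ⟨h, hh, hFh⟩ := ih fun i hi ↦ hcount i hi ▸ hzero i (mem_insert_of_mem hi)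
    have hm_zero : h (σ m) = 0 := by
      rw [← iteratedDeriv_prod_sub_mul_eq_zero_iff s σ (fun z ↦ hh.analyticAt z), ← funext hFh,
        ← hcount_max]
      exact hzero m (mem_insert_self m s)
    obtain ⟨q, hq, hhq⟩ := exists_differentiable_eq_sub_mul hh hm_zero
    refine ⟨q, hq, fun z ↦ ?_⟩
    rw [hFh, hhq, prod_insert fun hms ↦ lt_irrefl m (hm m hms)]
    ring

end EntireFactorization

section MovesZeros

variable {𝕜 H : Type*} [NontriviallyNormedField 𝕜] [Norm H]

/-- The first de Branges axiom for a family of functions `ι f`, with complex conjugation replaced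
by an arbitrary map `c`: any zero `z₀` of a member can be moved to `c z₀` without changing the norm.
The value of the new function at `z₀` is left unspecified, to be recovered by continuity. -/
def MovesZeros (c : 𝕜 → 𝕜) (ι : H → 𝕜 → 𝕜) : Prop :=
  ∀ (f : H) (z₀ : 𝕜), ι f z₀ = 0 →
    ∃ g : H, ‖g‖ = ‖f‖ ∧ ∀ z, z ≠ z₀ → ι g z = (z - c z₀) / (z - z₀) * ι f z

variable {c : 𝕜 → 𝕜} {ι : H → 𝕜 → 𝕜}

lemma MovesZeros.exists_sub_mul (hmove : MovesZeros c ι) (hcont : ∀ f, Continuous (ι f)) {f : H}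
    {a : 𝕜} {u : 𝕜 → 𝕜} (hu : Continuous u) (hf : ∀ z, ι f z = (z - a) * u z) :
    ∃ g : H, ‖g‖ = ‖f‖ ∧ ∀ z, ι g z = (z - c a) * u z := by
  obtain ⟨g, hg, hg_eq⟩ := hmove f a (by simp [hf])
  refine ⟨g, hg, congrFun ?_⟩
  refine (hcont g).ext_on (dense_compl_singleton a) (by fun_prop) fun z hz ↦ ?_
  have hza : z - a ≠ 0 := sub_ne_zero.2 hz
  rw [hg_eq z hz, hf, ← mul_assoc, div_mul_cancel₀ _ hza]

lemma MovesZeros.exists_prod_sub_mul (hmove : MovesZeros c ι) (hcont : ∀ f, Continuous (ι f))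
    {I : Type*} (s : Finset I) (w : I → 𝕜) {f : H} {u : 𝕜 → 𝕜} (hu : Continuous u)
    (hf : ∀ z, ι f z = (∏ i ∈ s, (z - w i)) * u z) :
    ∃ g : H, ‖g‖ = ‖f‖ ∧ ∀ z, ι g z = (∏ i ∈ s, (z - c (w i))) * u z := by
  classical
  induction s using Finset.induction_on generalizing f u with
  | empty => exact ⟨f, rfl, by simpa using hf⟩
  | insert m s hm ih =>
    simp only [prod_insert hm, mul_assoc] at hf
    obtain ⟨g, hg, hg_eq⟩ := hmove.exists_sub_mul hcont (by fun_prop) hf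
    obtain ⟨g', hg', hg'_eq⟩ := ih (f := g) (u := fun z ↦ (z - c (w m)) * u z) (by fun_prop)
      fun z ↦ by rw [hg_eq, mul_left_comm]
    exact ⟨g', hg'.trans hg, fun z ↦ by rw [hg'_eq, prod_insert hm, mul_left_comm, mul_assoc]⟩

end MovesZeros

theorem star_times_blaschke_in_Hsigma_general {H : Type*} [Norm H] (ι : H → ℂ → ℂ)
    (hdiff : ∀ f, Differentiable ℂ (ι f)) (hmove : MovesZeros conj ι)
    (hstar : ∀ f, ∃ fs : H, ‖fs‖ = ‖f‖ ∧ ∀ z, ι fs z = conj (ι f (conj z)))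
    {I : Type*} [Fintype I] [LinearOrder I] (σ : I → ℂ) (k : I → ℕ)
    (hk : ∀ i, k i = #{j | j < i ∧ σ j = σ i}) (f : H)
    (hf : ∀ i, iteratedDeriv (k i) (ι f) (σ i) = 0) :
    ∃ g : H, ‖g‖ = ‖f‖ ∧ (∀ i, iteratedDeriv (k i) (ι g) (σ i) = 0) ∧
      ∀ z, (∀ i, z ≠ conj (σ i)) →
        ι g z = (∏ i, (z - σ i) / (z - conj (σ i))) * conj (ι f (conj z)) := by
  obtain ⟨h, hh, hfh⟩ := exists_differentiable_eq_prod_sub_mul univ σ (hdiff f)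
    fun i _ ↦ hk i ▸ hf i
  have hh_star : Differentiable ℂ (conj ∘ h ∘ conj) :=
    fun z ↦ differentiableAt_conj_conj_iff.2 (hh (conj z))
  have hf_star (z : ℂ) :
      conj (ι f (conj z)) = (∏ i, (z - conj (σ i))) * (conj ∘ h ∘ conj) z := by
    simp [hfh, map_prod]
  obtain ⟨fs, hfs, hfs_eq⟩ := hstar f
  obtain ⟨g, hg, hg_eq⟩ := hmove.exists_prod_sub_mul (fun f ↦ (hdiff f).continuous) univ
    (fun i ↦ conj (σ i)) hh_star.continuous fun z ↦ (hfs_eq z).trans (hf_star z)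
  simp only [Complex.conj_conj] at hg_eq
  refine ⟨g, hg.trans hfs, fun i ↦ ?_, fun z hz ↦ ?_⟩
  · rw [funext hg_eq, hk]
    exact iteratedDeriv_prod_sub_mul_eq_zero σ (fun z ↦ hh_star.analyticAt z) (mem_univ i)
  · have hpole : ∏ i, (z - conj (σ i)) ≠ 0 := prod_ne_zero_iff.2 fun i _ ↦ sub_ne_zero.2 (hz i)
    rw [hg_eq, hf_star, prod_div_distrib, ← mul_assoc, div_mul_cancel₀ _ hpole]

/-- Let `H` be a Hilbert space of entire functions with continuous point
evaluations, satisfying de Branges axioms (1) and (3), and let `σ = (z₁, …, zₙ)` be a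
finite sequence of (not necessarily distinct) points with multiplicity counters `k i`.
If `f ∈ H` satisfies `f^(k_i)(z_i) = 0` for all `i`, then the function
`g(z) = (∏ (z − z_i)/(z − conj z_i)) · f*(z)` (where `f*(z) = conj(f(conj z))`, extended
to an entire function) belongs to `H`, has the same norm as `f`, and satisfies
`g^(k_i)(z_i) = 0` for all `i`. -/
theorem star_times_blaschke_in_Hsigma
    {H : Type*} [NormedAddCommGroup H] [InnerProductSpace ℂ H] [CompleteSpace H]
    (ι : H →ₗ[ℂ] (ℂ → ℂ)) (hι : Function.Injective ι)
    (hdiff : ∀ f : H, Differentiable ℂ (ι f))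
    (heval : ∀ z : ℂ, ∃ L : H →L[ℂ] ℂ, ∀ f : H, L f = ι f z)
    (axiom1 : ∀ (f : H) (z₀ : ℂ), ι f z₀ = 0 →
      ∃ g : H, ‖g‖ = ‖f‖ ∧
        ∀ z : ℂ, z ≠ z₀ → ι g z = ((z - starRingEnd ℂ z₀) / (z - z₀)) * ι f z)
    (axiom3 : ∀ f : H, ∃ fs : H, ‖fs‖ = ‖f‖ ∧
      ∀ z : ℂ, ι fs z = starRingEnd ℂ (ι f (starRingEnd ℂ z)))
    {n : ℕ} (σ : Fin n → ℂ) (k : Fin n → ℕ)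
    (hk : ∀ i, k i = (Finset.univ.filter fun j => j < i ∧ σ j = σ i).card) :
    ∀ f : H, (∀ i, iteratedDeriv (k i) (ι f) (σ i) = 0) →
      ∃ g : H, ‖g‖ = ‖f‖ ∧
        (∀ i, iteratedDeriv (k i) (ι g) (σ i) = 0) ∧
        ∀ z : ℂ, (∀ i, z ≠ starRingEnd ℂ (σ i)) →
          ι g z = (∏ i, (z - σ i) / (z - starRingEnd ℂ (σ i))) *
            starRingEnd ℂ (ι f (starRingEnd ℂ z)) := by
  exact star_times_blaschke_in_Hsigma_general ι hdiff axiom1 axiom3 σ k hk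
end

section
/- Let f ∈ H satisfy f^(k_i)(z_i) = 0 for all i = 1, …, n, let F be the entire function with F(z) = γ(z)·f(z) away from {z₁, …, zₙ}, and let z₀ ∈ ℂ satisfy F(z₀) = 0. Then there exists g ∈ H with g^(k_i)(z_i) = 0 for all i, ‖g‖ = ‖f‖, and γ(z)·g(z) = ((z − conj(z₀))/(z − z₀))·F(z) for all z outside {z₀, z₁, …, zₙ}. -/
/-!
Write `P z = ∏ i, (z - σ i)`. By continuity `ι f = P * F` everywhere, so `ι f z₀ = 0` and the axiom
provides `g`. Since `F z₀ = 0`, the function `G z = (z - conj z₀) / (z - z₀) * F z` extends to an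
entire function, and by continuity again `ι g = P * G`. Divisibility by `P` is exactly what makes
the prescribed derivatives vanish. Dividing `F` rather than `ι f` by `z - z₀` is what handles the
case where `z₀` is one of the `σ i`.
-/

open scoped Finset

theorem card_filter_lt_and_eq_lt_card_filter_eq {I α : Type*} [Fintype I] [Preorder I]
    [DecidableLT I] [DecidableEq α] (σ : I → α) (i : I) :
    #{j | j < i ∧ σ j = σ i} < #{j | σ j = σ i} := by
  refine Finset.card_lt_card <| Finset.ssubset_iff_of_subset ?_ |>.2 ⟨i, by simp, by simp⟩
  exact Finset.monotone_filter_right _ fun _ _ h ↦ h.2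

section NodalProduct

variable {𝕜 I : Type*} [NontriviallyNormedField 𝕜] [Fintype I]

theorem eq_prod_sub_mul_of_eq_inv_prod_sub_mul {σ : I → 𝕜} {f F : 𝕜 → 𝕜} (hf : Continuous f)
    (hF : Continuous F) (h : ∀ z, (∀ i, z ≠ σ i) → F z = (∏ i, (z - σ i))⁻¹ * f z) :
    f = fun z ↦ (∏ i, (z - σ i)) * F z := by
  have h_dense : Dense (Set.univ \ Set.range σ) := dense_univ.sdiff_finite (Set.finite_range σ)
  refine hf.ext_on h_dense (by fun_prop) fun z hz ↦ ?_
  have hzσ (i : I) : z ≠ σ i := fun hi ↦ hz.2 ⟨i, hi.symm⟩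
  have hP : ∏ i, (z - σ i) ≠ 0 := Finset.prod_ne_zero_iff.2 fun i _ ↦ sub_ne_zero.2 (hzσ i)
  simp only [h z hzσ, mul_inv_cancel_left₀ hP]

variable [DecidableEq 𝕜]

theorem card_filter_eq_le_analyticOrderAt_prod_sub_mul (σ : I → 𝕜) {G : 𝕜 → 𝕜} {a : 𝕜}
    (hG : AnalyticAt 𝕜 G a) :
    #{j | σ j = a} ≤ analyticOrderAt (fun z ↦ (∏ j, (z - σ j)) * G z) a := by
  refine (natCast_le_analyticOrderAt (by fun_prop)).2
    ⟨fun z ↦ (∏ j with σ j ≠ a, (z - σ j)) * G z, by fun_prop, .of_forall fun z ↦ ?_⟩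
  have h_pow : ∏ j with σ j = a, (z - σ j) = (z - a) ^ #{j | σ j = a} :=
    Finset.prod_eq_pow_card fun j hj ↦ by rw [(Finset.mem_filter.1 hj).2]
  rw [← Finset.prod_filter_mul_prod_filter_not Finset.univ (σ · = a), h_pow, mul_assoc,
    smul_eq_mul]

theorem iteratedDeriv_prod_sub_mul_eq_zero_s15 [CharZero 𝕜] [CompleteSpace 𝕜] (σ : I → 𝕜)
    {G : 𝕜 → 𝕜} {a : 𝕜} (hG : AnalyticAt 𝕜 G a) {m : ℕ} (hm : m < #{j | σ j = a}) :
    iteratedDeriv m (fun z ↦ (∏ j, (z - σ j)) * G z) a = 0 :=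
  (natCast_le_analyticOrderAt_iff_iteratedDeriv_eq_zero (by fun_prop)).1
    (card_filter_eq_le_analyticOrderAt_prod_sub_mul σ hG) m hm

end NodalProduct

theorem exists_differentiable_eq_div_mul_of_eq_zero {F : ℂ → ℂ} (hF : Differentiable ℂ F) {z₀ : ℂ}
    (hz₀ : F z₀ = 0) (w : ℂ) :
    ∃ G : ℂ → ℂ, Differentiable ℂ G ∧ ∀ z, z ≠ z₀ → G z = (z - w) / (z - z₀) * F z := by
  have h_dslope : Differentiable ℂ (dslope F z₀) := by
    rw [← differentiableOn_univ] at hF ⊢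
    exact (Complex.differentiableOn_dslope Filter.univ_mem).2 hF
  refine ⟨fun z ↦ (z - w) * dslope F z₀ z, by fun_prop, fun z hz ↦ ?_⟩
  simp only [dslope_of_ne F hz, slope_def_field, hz₀, sub_zero]
  ring

theorem Hsigma_blaschke_stability_general {H : Type*} [Norm H] (ι : H → ℂ → ℂ)
    (hdiff : ∀ f : H, Differentiable ℂ (ι f))
    (axiom1 : ∀ (f : H) (z₀ : ℂ), ι f z₀ = 0 →
      ∃ g : H, ‖g‖ = ‖f‖ ∧
        ∀ z : ℂ, z ≠ z₀ → ι g z = ((z - starRingEnd ℂ z₀) / (z - z₀)) * ι f z)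
    {I : Type*} [Fintype I] (σ : I → ℂ) (γ : ℂ → ℂ) (hγ : ∀ z, γ z = (∏ i, (z - σ i))⁻¹)
    (f : H) (F : ℂ → ℂ) (hFdiff : Differentiable ℂ F)
    (hF : ∀ z : ℂ, (∀ i, z ≠ σ i) → F z = γ z * ι f z) (z₀ : ℂ) (hz₀ : F z₀ = 0) :
    ∃ g : H, (∀ i, ∀ m < #{j | σ j = σ i}, iteratedDeriv m (ι g) (σ i) = 0) ∧ ‖g‖ = ‖f‖ ∧
      ∀ z : ℂ, z ≠ z₀ → (∀ i, z ≠ σ i) →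
        γ z * ι g z = ((z - starRingEnd ℂ z₀) / (z - z₀)) * F z := by
  have h_f : ι f = fun z ↦ (∏ i, (z - σ i)) * F z :=
    eq_prod_sub_mul_of_eq_inv_prod_sub_mul (hdiff f).continuous hFdiff.continuous
      fun z hz ↦ hγ z ▸ hF z hz
  obtain ⟨g, hg_norm, hg⟩ := axiom1 f z₀ (by simp [h_f, hz₀])
  obtain ⟨G, hG, hGF⟩ :=
    exists_differentiable_eq_div_mul_of_eq_zero hFdiff hz₀ (starRingEnd ℂ z₀)
  have h_g : ι g = fun z ↦ (∏ i, (z - σ i)) * G z := by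
    refine (hdiff g).continuous.ext_on (dense_compl_singleton z₀)
      (by have := hG.continuous; fun_prop) fun z hz ↦ ?_
    simp only [hg z hz, hGF z hz, h_f, mul_left_comm]
  refine ⟨g, fun i m hm ↦ ?_, hg_norm, fun z hz hzσ ↦ ?_⟩
  · exact h_g ▸ iteratedDeriv_prod_sub_mul_eq_zero_s15 σ (hG.analyticAt _) hm
  · rw [hg z hz, hF z hzσ, mul_left_comm]

/-- Let `H` be a Hilbert space of entire functions with continuous point
evaluations, satisfying de Branges axiom (1), `σ = (z₁, …, zₙ)` a finite sequence of (not
necessarily distinct) points with multiplicity counters `k i`, and `γ z = 1/∏ (z − z_i)`.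
Let `f ∈ H` satisfy `f^(k_i)(z_i) = 0` for all `i`, let `F` be the entire function with
`F(z) = γ(z)·f(z)` away from `{z₁, …, zₙ}`, and let `z₀` satisfy `F(z₀) = 0`. Then there
exists `g ∈ H` with `g^(k_i)(z_i) = 0` for all `i`, `‖g‖ = ‖f‖`, and
`γ(z)·g(z) = ((z − conj z₀)/(z − z₀))·F(z)` for all `z` outside `{z₀, z₁, …, zₙ}`. -/
theorem Hsigma_blaschke_stability
    {H : Type*} [NormedAddCommGroup H] [InnerProductSpace ℂ H] [CompleteSpace H]
    (ι : H →ₗ[ℂ] (ℂ → ℂ)) (hι : Function.Injective ι)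
    (hdiff : ∀ f : H, Differentiable ℂ (ι f))
    (heval : ∀ z : ℂ, ∃ L : H →L[ℂ] ℂ, ∀ f : H, L f = ι f z)
    (axiom1 : ∀ (f : H) (z₀ : ℂ), ι f z₀ = 0 →
      ∃ g : H, ‖g‖ = ‖f‖ ∧
        ∀ z : ℂ, z ≠ z₀ → ι g z = ((z - starRingEnd ℂ z₀) / (z - z₀)) * ι f z)
    {n : ℕ} (σ : Fin n → ℂ) (k : Fin n → ℕ)
    (hk : ∀ i, k i = (Finset.univ.filter fun j => j < i ∧ σ j = σ i).card)
    (γ : ℂ → ℂ) (hγ : ∀ z, γ z = (∏ i, (z - σ i))⁻¹)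
    (f : H) (hf : ∀ i, iteratedDeriv (k i) (ι f) (σ i) = 0)
    (F : ℂ → ℂ) (hFdiff : Differentiable ℂ F)
    (hF : ∀ z : ℂ, (∀ i, z ≠ σ i) → F z = γ z * ι f z)
    (z₀ : ℂ) (hz₀ : F z₀ = 0) :
    ∃ g : H, (∀ i, iteratedDeriv (k i) (ι g) (σ i) = 0) ∧ ‖g‖ = ‖f‖ ∧
      ∀ z : ℂ, z ≠ z₀ → (∀ i, z ≠ σ i) →
        γ z * ι g z = ((z - starRingEnd ℂ z₀) / (z - z₀)) * F z := by
  obtain ⟨g, hg, hg_rest⟩ :=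
    Hsigma_blaschke_stability_general ι hdiff axiom1 σ γ hγ f F hFdiff hF z₀ hz₀
  exact ⟨g, fun i ↦ hg i _ (hk i ▸ card_filter_lt_and_eq_lt_card_filter_eq σ i), hg_rest⟩
end

section
/- For every z ∈ ℂ with z ≠ conj(z_i) for all i and z ∉ {z₁, …, zₙ}, one has f_n(z) = (∏_{i=1}^n (z − z_i)/(z − conj(z_i))) · conj(e_n(conj(z))). -/
/-!
The Paley-Wiener kernel is a de Branges kernel with structure function `E w = exp (-i x w)`, so
`b - conj a` times `K a b` is a sum of two products of a function of `a` and a function of `b`.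
Hence multiplying the columns of the matrix of `f_n(z)` by `z - conj z_j`, and the rows of the
conjugate transpose of the matrix of `e_n(conj z)` by `z - z_i`, leads, after subtracting multiples
of the last column and of the last row respectively, to two bordered matrices with the same core.
They differ only in whether the factor `i E(z)` sits in the border row or in the border column,
which does not affect the determinant.
-/

section BorderedDeterminants

open Matrix Polynomial

variable {m n R : Type*} [Fintype m] [Fintype n] [DecidableEq m] [DecidableEq n] [CommRing R]

theorem det_fromBlocks_smul_comm_of_isRegular {c : R} (hc : IsRegular c) (A : Matrix m m R)
    (B : Matrix m n R) (C : Matrix n m R) (D : Matrix n n R) :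
    (fromBlocks A (c • B) C D).det = (fromBlocks A B (c • C) D).det := by
  have similarity : fromBlocks 1 0 0 (c • 1) * fromBlocks A (c • B) C D =
      fromBlocks A B (c • C) D * fromBlocks 1 0 0 (c • 1) := by
    simp [fromBlocks_multiply]
  have det_eq := congrArg det similarity
  rw [det_mul, det_mul, mul_comm (fromBlocks A B (c • C) D).det, det_fromBlocks_zero₂₁, det_one,
    one_mul, det_smul, det_one, mul_one] at det_eq
  exact (hc.pow _).left det_eq

-- The scalar may be a zero divisor, so the identity is specialised from the regular scalar `X`.
theorem det_fromBlocks_smul_comm (c : R) (A : Matrix m m R) (B : Matrix m n R)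
    (C : Matrix n m R) (D : Matrix n n R) :
    (fromBlocks A (c • B) C D).det = (fromBlocks A B (c • C) D).det := by
  have generic := congrArg (evalRingHom c) <| det_fromBlocks_smul_comm_of_isRegular
    (isRegular_X (R := R)) (A.map Polynomial.C) (B.map Polynomial.C) (C.map Polynomial.C)
    (D.map Polynomial.C)
  have eval_comp_C : evalRingHom c ∘ Polynomial.C = id := by ext; simp
  have eval_smul_B : ((X : R[X]) • B.map Polynomial.C).map (evalRingHom c) = c • B := by
    ext; simp [mul_comm c]
  have eval_smul_C : ((X : R[X]) • C.map Polynomial.C).map (evalRingHom c) = c • C := by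
    ext; simp [mul_comm c]
  simpa only [RingHom.map_det, RingHom.mapMatrix_apply, fromBlocks_map, Matrix.map_map,
    eval_comp_C, Matrix.map_id, eval_smul_B, eval_smul_C] using generic

/-- The bordered matrix `[A, u; v, d]`, the common form of the matrices of `e_n` and `f_n`. It is
indexed by `m ⊕ Unit` so that its four blocks are accessible. -/
def borderedMatrix {m R : Type*} (A : Matrix m m R) (u v : m → R) (d : R) :
    Matrix (m ⊕ Unit) (m ⊕ Unit) R :=
  fromBlocks A (replicateCol Unit u) (replicateRow Unit v) (of fun _ _ => d)

theorem conjTranspose_borderedMatrix {m R : Type*} [Star R] (A : Matrix m m R) (u v : m → R)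
    (d : R) : (borderedMatrix A u v d)ᴴ = borderedMatrix Aᴴ (star v) (star u) (star d) := by
  rw [borderedMatrix, fromBlocks_conjTranspose, conjTranspose_replicateCol,
    conjTranspose_replicateRow]
  rfl

theorem det_borderedMatrix_smul_comm (A : Matrix m m R) (u v : m → R) (c d : R) :
    (borderedMatrix A (c • u) v d).det = (borderedMatrix A u (c • v) d).det := by
  simpa only [borderedMatrix, replicateCol_smul, replicateRow_smul] using
    det_fromBlocks_smul_comm c A (replicateCol Unit u) (replicateRow Unit v) (of fun _ _ => d)

theorem det_borderedMatrix_mul_prod (A : Matrix m m R) (u v y p : m → R) (d : R) :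
    (borderedMatrix A u v d).det * ∏ j, y j =
      (borderedMatrix (of fun i j => A i j * y j - u i * p j) u (fun j => v j * y j - d * p j)
        d).det := by
  have column_ops : borderedMatrix A u v d *
      fromBlocks (diagonal y) 0 (-replicateRow Unit p) 1 =
      borderedMatrix (of fun i j => A i j * y j - u i * p j) u (fun j => v j * y j - d * p j)
        d := by
    ext (i | i) (j | j) <;>
      simp [borderedMatrix, Matrix.mul_apply, diagonal_apply, sub_eq_add_neg]
  rw [← column_ops, det_mul, det_fromBlocks_zero₁₂, det_diagonal, det_one, mul_one]

theorem prod_mul_det_borderedMatrix (A : Matrix m m R) (u v y q : m → R) (d : R) :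
    (∏ i, y i) * (borderedMatrix A u v d).det =
      (borderedMatrix (of fun i j => y i * A i j - q i * v j) (fun i => y i * u i - q i * d) v
        d).det := by
  have row_ops : fromBlocks (diagonal y) (-replicateCol Unit q) 0 1 * borderedMatrix A u v d =
      borderedMatrix (of fun i j => y i * A i j - q i * v j) (fun i => y i * u i - q i * d) v
        d := by
    ext (i | i) (j | j) <;>
      simp [borderedMatrix, Matrix.mul_apply, diagonal_apply, sub_eq_add_neg]
  rw [← row_ops, det_mul, det_fromBlocks_zero₂₁, det_diagonal, det_one, mul_one]

theorem det_borderedMatrix_of_displacement {A : Matrix m m R} {a w u v p q s t : m → R} {z d r : R}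
    (hA : ∀ i j, (a i - w j) * A i j = u i * p j - q i * v j)
    (hs : ∀ j, (z - w j) * s j = d * p j - r * v j)
    (ht : ∀ i, (z - a i) * t i = d * q i - r * u i) :
    (borderedMatrix A u s d).det * ∏ j, (z - w j) =
      (∏ i, (z - a i)) * (borderedMatrix A t v d).det := by
  rw [det_borderedMatrix_mul_prod A u s _ p, prod_mul_det_borderedMatrix A t v _ q]
  have core_eq : (of fun i j => A i j * (z - w j) - u i * p j) =
      of fun i j => (z - a i) * A i j - q i * v j := by
    ext i j
    simp only [of_apply]
    linear_combination hA i j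
  have row_eq : (fun j => s j * (z - w j) - d * p j) = -r • v := by
    ext j
    simp only [Pi.smul_apply, smul_eq_mul]
    linear_combination hs j
  have col_eq : (fun i => (z - a i) * t i - q i * d) = -r • u := by
    ext i
    simp only [Pi.smul_apply, smul_eq_mul]
    linear_combination ht i
  rw [core_eq, row_eq, col_eq, det_borderedMatrix_smul_comm]

/-- The determinant of the kernel matrix of the points `σ 0, …, σ (n - 1), z` against
`σ 0, …, σ (n - 1)`, completed to a square matrix by the values of `g` as last column. The paper's
`e_n` and `f_n` are the cases of `K = S` and `g w = exp (∓ i x w)`. -/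
noncomputable def kernelBorderedDet {α : Type*} {n : ℕ} (K : α → α → R) (g : α → R)
    (σ : Fin n → α) (z : α) : R :=
  (of fun i j : Fin (n + 1) =>
    Fin.lastCases (g ((Fin.snoc σ z : Fin (n + 1) → α) i))
      (fun j' : Fin n => K (σ j') ((Fin.snoc σ z : Fin (n + 1) → α) i)) j).det

theorem kernelBorderedDet_eq_det_borderedMatrix {α : Type*} {n : ℕ} (K : α → α → R) (g : α → R)
    (σ : Fin n → α) (z : α) :
    kernelBorderedDet K g σ z =
      (borderedMatrix (of fun i j => K (σ j) (σ i)) (g ∘ σ) (fun j => K (σ j) z) (g z)).det := by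
  rw [kernelBorderedDet, ← det_submatrix_equiv_self
    (finSuccEquivLast.trans (Equiv.optionEquivSumPUnit (Fin n))).symm]
  congr 1
  ext (i | i) (j | j) <;> simp [borderedMatrix]

end BorderedDeterminants

section DeBranges

open ComplexConjugate

/-- `K` has the algebraic form of the reproducing kernel of the de Branges space of `E`: it is
Hermitian and satisfies `i (conj a - b) K(a, b) = conj (E a) E b - conj (E♯ a) E♯ b`, where
`E♯ w = conj (E (conj w))`. The identity is multiplied out, so at `conj a = b` only the symmetry
constrains `K`; neither analyticity nor the Hermite-Biehler inequality is asked of `E`. -/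
structure IsDeBrangesKernel (E : ℂ → ℂ) (K : ℂ → ℂ → ℂ) : Prop where
  conj_apply : ∀ a b, conj (K a b) = K b a
  displacement : ∀ a b, Complex.I * (conj a - b) * K a b =
    conj (E a) * E b - E (conj a) * conj (E (conj b))

variable {n : ℕ} {E : ℂ → ℂ} {K : ℂ → ℂ → ℂ}

theorem IsDeBrangesKernel.conj_kernelBorderedDet (hK : IsDeBrangesKernel E K) (σ : Fin n → ℂ)
    (z : ℂ) :
    conj (kernelBorderedDet K E σ (conj z)) =
      (borderedMatrix (Matrix.of fun i j => K (σ j) (σ i)) (fun i => K (conj z) (σ i))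
        (fun j => conj (E (σ j))) (conj (E (conj z)))).det := by
  rw [kernelBorderedDet_eq_det_borderedMatrix, starRingEnd_apply, ← Matrix.det_conjTranspose,
    conjTranspose_borderedMatrix]
  congr 2
  · ext i j
    exact hK.conj_apply _ _
  · ext i
    exact hK.conj_apply _ _

theorem IsDeBrangesKernel.kernelBorderedDet_mul_prod (hK : IsDeBrangesKernel E K)
    (σ : Fin n → ℂ) (z : ℂ) :
    kernelBorderedDet K (fun w => conj (E (conj w))) σ z * ∏ i, (z - conj (σ i)) =
      (∏ i, (z - σ i)) * conj (kernelBorderedDet K E σ (conj z)) := by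
  have sub_mul_apply (a b : ℂ) : (b - conj a) * K a b =
      conj (E (conj b)) * (-Complex.I * E (conj a)) - -Complex.I * E b * conj (E a) := by
    linear_combination Complex.I * hK.displacement a b +
      (b - conj a) * K a b * Complex.I_mul_I
  rw [hK.conj_kernelBorderedDet, kernelBorderedDet_eq_det_borderedMatrix]
  refine det_borderedMatrix_of_displacement (p := fun j => -Complex.I * E (conj (σ j)))
    (q := fun i => -Complex.I * E (σ i)) (r := -Complex.I * E z) (fun i j => sub_mul_apply _ _)
    (fun j => sub_mul_apply _ _) fun i => ?_
  have swapped := sub_mul_apply (conj z) (σ i)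
  rw [Complex.conj_conj] at swapped
  simp only [Function.comp_apply]
  linear_combination -swapped

theorem paley_wiener_fn_eq_blaschke_conj_en_general (hK : IsDeBrangesKernel E K) (σ : Fin n → ℂ)
    (z : ℂ) (hz : ∀ i, z ≠ conj (σ i)) :
    kernelBorderedDet K (fun w => conj (E (conj w))) σ z =
      (∏ i, (z - σ i) / (z - conj (σ i))) * conj (kernelBorderedDet K E σ (conj z)) := by
  have prod_ne_zero : ∏ i, (z - conj (σ i)) ≠ 0 :=
    Finset.prod_ne_zero_iff.mpr fun i _ => sub_ne_zero.mpr (hz i)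
  rw [Finset.prod_div_distrib, div_mul_eq_mul_div, eq_div_iff prod_ne_zero,
    hK.kernelBorderedDet_mul_prod]

end DeBranges

section PaleyWiener

open ComplexConjugate Complex

theorem conj_exp_neg_I_mul_conj (x : ℝ) (w : ℂ) :
    conj (exp (-(I * x * conj w))) = exp (I * x * w) := by
  simp [← exp_conj]

theorem isDeBrangesKernel_exp {x : ℝ} {S : ℂ → ℂ → ℂ}
    (hS : ∀ a b : ℂ, conj a ≠ b → S a b = 2 * sin (x * (conj a - b)) / (conj a - b))
    (hS' : ∀ a b : ℂ, conj a = b → S a b = 2 * x) :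
    IsDeBrangesKernel (fun w => exp (-(I * x * w))) S where
  conj_apply a b := by
    obtain rfl | hab := eq_or_ne (conj a) b
    · simp [hS', map_ofNat]
    · have hba : conj b ≠ a := fun h => hab (by rw [← h, conj_conj])
      rw [hS a b hab, hS b a hba, ← neg_sub a, mul_neg, sin_neg, mul_neg, neg_div_neg_eq]
      simp [← sin_conj, map_ofNat]
  displacement a b := by
    have sub_mul_apply : (conj a - b) * S a b = 2 * sin (x * (conj a - b)) := by
      obtain rfl | hab := eq_or_ne (conj a) b
      · simp
      · rw [hS a b hab, mul_div_cancel₀ _ (sub_ne_zero.mpr hab)]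
    have conj_exp : conj (exp (-(I * x * a))) = exp (I * x * conj a) := by
      simpa only [conj_conj] using conj_exp_neg_I_mul_conj x (conj a)
    calc
      I * (conj a - b) * S a b = I * (2 * sin (x * (conj a - b))) := by
        rw [mul_assoc, sub_mul_apply]
      _ = exp (x * (conj a - b) * I) - exp (-(x * (conj a - b)) * I) := by
        rw [two_sin]
        linear_combination (exp (-(x * (conj a - b)) * I) - exp (x * (conj a - b) * I)) * I_mul_I
      _ = conj (exp (-(I * x * a))) * exp (-(I * x * b)) -
          exp (-(I * x * conj a)) * conj (exp (-(I * x * conj b))) := by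
        rw [conj_exp, conj_exp_neg_I_mul_conj, ← exp_add, ← exp_add]
        ring_nf

end PaleyWiener

/-- Paley–Wiener example. Let `x > 0`, `z₁, …, zₙ` distinct complex numbers,
and `S a b = 2·sin(x·(conj a − b))/(conj a − b)` (with value `2x` when `conj a = b`), the
reproducing kernel of `PW_x`. With the determinants `e_n(z)`, `f_n(z)` of the paper, for
every `z` with `z ≠ conj z_i` for all `i` and `z ∉ {z₁, …, zₙ}` one has
`f_n(z) = (∏ (z − z_i)/(z − conj z_i)) · conj(e_n(conj z))`. -/
theorem paley_wiener_fn_eq_blaschke_conj_en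
    {n : ℕ} (x : ℝ) (hx : 0 < x) (σ : Fin n → ℂ) (hσ : Function.Injective σ)
    (S : ℂ → ℂ → ℂ)
    (hS : ∀ a b : ℂ, starRingEnd ℂ a ≠ b →
      S a b = 2 * Complex.sin ((x : ℂ) * (starRingEnd ℂ a - b)) / (starRingEnd ℂ a - b))
    (hS' : ∀ a b : ℂ, starRingEnd ℂ a = b → S a b = 2 * (x : ℂ)) :
    ∀ z : ℂ, (∀ i, z ≠ starRingEnd ℂ (σ i)) → (∀ i, z ≠ σ i) →
      (Matrix.of fun i j : Fin (n + 1) =>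
          Fin.lastCases (Complex.exp (Complex.I * (x : ℂ) * (Fin.snoc σ z : Fin (n + 1) → ℂ) i))
            (fun j' : Fin n => S (σ j') ((Fin.snoc σ z : Fin (n + 1) → ℂ) i)) j).det =
      (∏ i, (z - σ i) / (z - starRingEnd ℂ (σ i))) *
        starRingEnd ℂ
          ((Matrix.of fun i j : Fin (n + 1) =>
            Fin.lastCases
              (Complex.exp (-(Complex.I * (x : ℂ) * (Fin.snoc σ (starRingEnd ℂ z) : Fin (n + 1) → ℂ) i)))
              (fun j' : Fin n => S (σ j') ((Fin.snoc σ (starRingEnd ℂ z) : Fin (n + 1) → ℂ) i)) j).det) := by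
  intro z hz _
  simpa only [kernelBorderedDet, conj_exp_neg_I_mul_conj] using
    paley_wiener_fn_eq_blaschke_conj_en_general (isDeBrangesKernel_exp hS hS') σ z hz
end
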